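/- arXiv:1907.00482 — 8 statements merged into one kernel-verified Lean document; each statement's English description precedes it below -/
import Mathlib

section
/- Consider the downlink narrowband model with channel H ∈ ℂ^{N_MS × N_BS}, and assume every column submatrix H_T with |T| ≥ N_MS has rank N_MS. Then for any integers n₁, n₂ with N_MS ≤ n₁ < n₂ ≤ N_BS, the maximum sum rate strictly increases: max over subsets T ⊆ {1,…,N_BS} with N_MS ≤ |T| ≤ n₁ of R(T) is strictly less than the maximum of R(T) over subsets T with N_MS ≤ |T| ≤ n₂. -/
open Matrix

section
open scoped ComplexOrder

theorem aux_trace {n : ℕ} (hn : 0 < n) (A : Matrix (Fin n) (Fin n) ℂ) (hA : A.PosDef)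
    (h : Fin n → ℂ) (hh : h ≠ 0) :
    0 < ((A + vecMulVec h (star h))⁻¹).trace.re ∧
    ((A + vecMulVec h (star h))⁻¹).trace.re < (A⁻¹).trace.re := by
  have : Nonempty (Fin n) := ⟨⟨0, hn⟩⟩
  have hB : (A + vecMulVec h (star h)).PosDef :=
    hA.add_posSemidef (posSemidef_vecMulVec_self_star h)
  refine ⟨(Complex.pos_iff.mp hB.inv.trace_pos).1, ?_⟩
  set u := A⁻¹ *ᵥ h with hu
  set s := star h ⬝ᵥ u with hs
  have hAu : A *ᵥ u = h := by
    rw [hu, mulVec_mulVec, mul_nonsing_inv _ ((isUnit_iff_isUnit_det A).mp hA.isUnit), one_mulVec]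
  have hu0 : u ≠ 0 := by
    intro h0
    rw [h0, mulVec_zero] at hAu
    exact hh hAu.symm
  have hs0 : 0 ≤ s := hA.inv.posSemidef.dotProduct_mulVec_nonneg h
  have hs1 : 0 < 1 + s := add_pos_of_pos_of_nonneg one_pos hs0
  have hsu : star u = star h ᵥ* A⁻¹ := by
    rw [hu, star_mulVec, hA.inv.isHermitian.eq]
  have hinv : (A + vecMulVec h (star h))⁻¹ = A⁻¹ - (1 + s)⁻¹ • vecMulVec u (star u) := by
    apply inv_eq_right_inv
    have e1 : A * A⁻¹ = 1 := mul_nonsing_inv _ ((isUnit_iff_isUnit_det A).mp hA.isUnit)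
    have e2 : A * vecMulVec u (star u) = vecMulVec h (star u) := by
      rw [mul_vecMulVec, hAu]
    have e3 : vecMulVec h (star h) * A⁻¹ = vecMulVec h (star u) := by
      rw [vecMulVec_mul, hsu]
    have e4 : vecMulVec h (star h) * vecMulVec u (star u) = s • vecMulVec h (star u) := by
      rw [vecMulVec_mul_vecMulVec, ← hs, vecMulVec_smul]
    rw [add_mul, mul_sub, mul_sub, Matrix.mul_smul, Matrix.mul_smul, e1, e2, e3, e4]
    have : vecMulVec h (star u) = (1 + s)⁻¹ • vecMulVec h (star u) +
        (1 + s)⁻¹ • s • vecMulVec h (star u) := by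
      rw [smul_smul, ← add_smul]
      rw [show (1 + s)⁻¹ + (1 + s)⁻¹ * s = 1 by field_simp [hs1.ne'], one_smul]
    nth_rewrite 2 [this]
    abel
  have hpos : 0 < (1 + s)⁻¹ * (star u ⬝ᵥ u) :=
    mul_pos (inv_pos.mpr hs1) (dotProduct_star_self_pos_iff.mpr hu0)
  rw [hinv, trace_sub, trace_smul, trace_vecMulVec, dotProduct_comm, Complex.sub_re, smul_eq_mul]
  have := (Complex.pos_iff.mp hpos).1
  linarith

theorem aux_rate (P α a b : ℝ) (hP : 0 < P) (hα : α ∈ Set.Ioo (0 : ℝ) 1) (hb : 0 < b)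
    (hab : b < a) :
    Real.logb 2 (1 + α * (P / a) / (1 + (1 - α) * (P / a))) <
    Real.logb 2 (1 + α * (P / b) / (1 + (1 - α) * (P / b))) := by
  obtain ⟨h0, h1⟩ := hα
  have hpq : P / a < P / b := div_lt_div_of_pos_left hP hb hab
  have hp : 0 < P / a := div_pos hP (hb.trans hab)
  have h1' : 0 < 1 - α := by linarith
  generalize P / a = x at *
  generalize P / b = y at *
  have hy : 0 < y := hp.trans hpq
  apply Real.logb_lt_logb (by norm_num) (by positivity)
  have : α * x / (1 + (1 - α) * x) < α * y / (1 + (1 - α) * y) := by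
    rw [div_lt_div_iff₀ (by positivity) (by positivity)]
    nlinarith [mul_lt_mul_of_pos_left hpq h0]
  linarith

theorem aux_posDef {n : ℕ} {κ : Type*} [Fintype κ] (M : Matrix (Fin n) κ ℂ) (hM : M.rank = n) :
    (M * Mᴴ).PosDef := by
  apply PosDef.mul_conjTranspose_self
  rw [vecMul_injective_iff, linearIndependent_iff_card_eq_finrank_span, Set.finrank,
    ← rank_eq_finrank_span_row, hM, Fintype.card_fin]

theorem aux_col {n m : ℕ} (hn : 0 < n) (hnm : n ≤ m) (H : Matrix (Fin n) (Fin m) ℂ)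
    (hrank : ∀ T : Finset (Fin m), n ≤ T.card →
      (H.submatrix id (fun t : T => (t : Fin m))).rank = n) (j : Fin m) :
    (fun i => H i j) ≠ 0 := by
  obtain ⟨T, hT, hc⟩ := Finset.exists_superset_card_eq (s := {j}) (n := n) (by simp only [Finset.card_singleton]; omega)
    (by simpa using hnm)
  have hr := hrank T hc.ge
  have hl : LinearIndependent ℂ (H.submatrix id (fun t : T => (t : Fin m))).col := by
    rw [linearIndependent_iff_card_eq_finrank_span, Set.finrank, ← rank_eq_finrank_span_cols, hr,
      Fintype.card_coe, hc]
  exact hl.ne_zero ⟨j, hT (by simp)⟩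

theorem aux_insert {n m : ℕ} (H : Matrix (Fin n) (Fin m) ℂ) (T : Finset (Fin m)) (j : Fin m)
    (hj : j ∉ T) :
    (H.submatrix id (fun t : (insert j T : Finset (Fin m)) => (t : Fin m))) *
      (H.submatrix id (fun t : (insert j T : Finset (Fin m)) => (t : Fin m)))ᴴ =
    (H.submatrix id (fun t : T => (t : Fin m))) * (H.submatrix id (fun t : T => (t : Fin m)))ᴴ +
      vecMulVec (fun i => H i j) (star (fun i => H i j)) := by
  ext i k
  simp only [Matrix.mul_apply, Matrix.add_apply, submatrix_apply, conjTranspose_apply, id, vecMulVec_apply,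
    Pi.star_apply]
  rw [Finset.sum_coe_sort (insert j T) (fun t => H i t * star (H k t)),
    Finset.sum_coe_sort T (fun t => H i t * star (H k t)), Finset.sum_insert hj, add_comm]

end

/-- Downlink narrowband model: `H : ℂ^{N_MS × N_BS}` with every column
submatrix `H_T` (for `|T| ≥ N_MS`) of rank `N_MS`.  With `p_T = P / tr((H_T H_Tᴴ)⁻¹)` and
`R T = N_MS log₂(1 + α p_T / (1 + (1-α) p_T))`, for `N_MS ≤ n₁ < n₂ ≤ N_BS` the maximum of `R`
over subsets with `N_MS ≤ |T| ≤ n₁` is strictly smaller than the maximum over subsets with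
`N_MS ≤ |T| ≤ n₂`. -/
theorem stmt3 (N_MS N_BS : ℕ) (hms : 0 < N_MS)
    (H : Matrix (Fin N_MS) (Fin N_BS) ℂ) (P α : ℝ) (hP : 0 < P) (hα : α ∈ Set.Ioo (0 : ℝ) 1)
    (hrank : ∀ T : Finset (Fin N_BS), N_MS ≤ T.card →
      (H.submatrix id (fun t : T => (t : Fin N_BS))).rank = N_MS)
    (p : Finset (Fin N_BS) → ℝ)
    (hp : ∀ T : Finset (Fin N_BS),
      p T = P / ((((H.submatrix id (fun t : T => (t : Fin N_BS))) *
        (H.submatrix id (fun t : T => (t : Fin N_BS)))ᴴ)⁻¹).trace).re)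
    (R : Finset (Fin N_BS) → ℝ)
    (hR : ∀ T : Finset (Fin N_BS),
      R T = (N_MS : ℝ) * Real.logb 2 (1 + α * p T / (1 + (1 - α) * p T)))
    (n₁ n₂ : ℕ) (h1 : N_MS ≤ n₁) (h12 : n₁ < n₂) (h2 : n₂ ≤ N_BS) :
    sSup {x : ℝ | ∃ T : Finset (Fin N_BS), N_MS ≤ T.card ∧ T.card ≤ n₁ ∧ x = R T} <
      sSup {x : ℝ | ∃ T : Finset (Fin N_BS), N_MS ≤ T.card ∧ T.card ≤ n₂ ∧ x = R T} := by
  have hfin : ∀ n : ℕ,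
      {x : ℝ | ∃ T : Finset (Fin N_BS), N_MS ≤ T.card ∧ T.card ≤ n ∧ x = R T}.Finite := by
    intro n
    apply (Set.finite_range R).subset
    rintro x ⟨T, -, -, rfl⟩
    exact ⟨T, rfl⟩
  have hne : {x : ℝ | ∃ T : Finset (Fin N_BS), N_MS ≤ T.card ∧ T.card ≤ n₁ ∧ x = R T}.Nonempty := by
    obtain ⟨T, -, hT⟩ := Finset.exists_subset_card_eq (s := (Finset.univ : Finset (Fin N_BS)))
      (n := N_MS) (by simp; omega)
    exact ⟨R T, T, hT.ge, by omega, rfl⟩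
  obtain ⟨T, hT1, hT2, hT⟩ := hne.csSup_mem (hfin n₁)
  rw [hT]
  obtain ⟨j, hj⟩ : ∃ j, j ∉ T := by
    by_contra! hc
    have := Finset.card_le_card (fun x _ => hc x : (Finset.univ : Finset (Fin N_BS)) ⊆ T)
    simp at this
    omega
  have hcard := Finset.card_insert_of_notMem hj
  refine lt_of_lt_of_le ?_ (le_csSup (hfin n₂).bddAbove
    ⟨insert j T, by omega, by omega, rfl⟩)
  rw [hR, hR, hp, hp, aux_insert H T j hj]
  obtain ⟨hb, hab⟩ := aux_trace hms _ (aux_posDef _ (hrank T hT1)) (fun i => H i j)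
    (aux_col hms (by omega) H hrank j)
  exact mul_lt_mul_of_pos_left (aux_rate P α _ _ hP hα hb hab) (by exact_mod_cast hms)
end

section
/- Let α ∈ (0,1), let 0 < t₂ < t₁ be reals, and let N be a positive integer. For P > 0 define the sum-rate loss g(P) = N·log₂( ((t₂ + P)·(t₁ + (1−α)·P)) / ((t₂ + (1−α)·P)·(t₁ + P)) ). Then g attains its maximum over P > 0 at P* = √(t₁·t₂/(1−α)); that is, g(P) ≤ g(P*) for all P > 0, and the maximum value equals g(P*) = N·log₂(1 + α·(t₁ − t₂)/(t₂ + (1−α)·t₁ + 2·√((1−α)·t₁·t₂))). -/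
/-- For `α ∈ (0,1)`, `0 < t₂ < t₁`, `N` a positive integer, and the sum-rate
loss `g P = N log₂(((t₂+P)(t₁+(1-α)P)) / ((t₂+(1-α)P)(t₁+P)))`, the function `g` attains its
maximum over `P > 0` at `P* = √(t₁ t₂ / (1-α))`, with maximum value
`N log₂(1 + α(t₁-t₂)/(t₂+(1-α)t₁+2√((1-α)t₁t₂)))`. -/
theorem stmt5 (α t₁ t₂ : ℝ) (hα : α ∈ Set.Ioo (0 : ℝ) 1) (ht₂ : 0 < t₂) (ht : t₂ < t₁)
    (N : ℕ) (hN : 0 < N)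
    (g : ℝ → ℝ)
    (hg : ∀ P, g P = (N : ℝ) * Real.logb 2
      (((t₂ + P) * (t₁ + (1 - α) * P)) / ((t₂ + (1 - α) * P) * (t₁ + P))))
    (Pstar : ℝ) (hPstar : Pstar = Real.sqrt (t₁ * t₂ / (1 - α))) :
    (∀ P : ℝ, 0 < P → g P ≤ g Pstar) ∧
      g Pstar = (N : ℝ) * Real.logb 2
        (1 + α * (t₁ - t₂) / (t₂ + (1 - α) * t₁ + 2 * Real.sqrt ((1 - α) * t₁ * t₂))) := by
  obtain ⟨hα0, hα1⟩ := hα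
  have hb : 0 < 1 - α := by linarith
  have ht₁ : 0 < t₁ := by linarith
  have hN' : (0 : ℝ) ≤ N := by positivity
  have hd : 0 < t₁ - t₂ := by linarith
  have hc : 0 < (1 - α) * t₁ * t₂ := by positivity
  set s := Real.sqrt ((1 - α) * t₁ * t₂) with hs
  have hs0 : 0 < s := Real.sqrt_pos.mpr hc
  have hs2 : s ^ 2 = (1 - α) * t₁ * t₂ := Real.sq_sqrt hc.le
  have hP : Pstar = s / (1 - α) := by
    rw [hPstar, Real.sqrt_eq_iff_mul_self_eq (by positivity) (by positivity)]
    field_simp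
    linarith
  have key : ∀ P : ℝ, 0 < P →
      ((t₂ + P) * (t₁ + (1 - α) * P)) / ((t₂ + (1 - α) * P) * (t₁ + P))
        = 1 + α * (t₁ - t₂) * P / ((t₂ + (1 - α) * P) * (t₁ + P)) := by
    intro P hP0
    have h1 : (t₂ + (1 - α) * P) * (t₁ + P) ≠ 0 := by positivity
    rw [div_eq_iff h1, add_mul 1, div_mul_cancel₀ _ h1]
    ring
  have hval : g Pstar = (N : ℝ) * Real.logb 2
      (1 + α * (t₁ - t₂) / (t₂ + (1 - α) * t₁ + 2 * s)) := by
    have hP0 : 0 < Pstar := by rw [hP]; positivity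
    have hbP : s = (1 - α) * Pstar := by rw [hP]; field_simp
    have h1 : (t₂ + (1 - α) * Pstar) * (t₁ + Pstar)
        = (t₂ + (1 - α) * t₁ + 2 * s) * Pstar := by
      have h2 : t₁ * t₂ = (1 - α) * Pstar ^ 2 := by
        apply mul_left_cancel₀ hb.ne'
        rw [hbP] at hs2
        linarith
      rw [hbP]
      linear_combination h2
    rw [hg, key _ hP0, h1, mul_div_mul_right _ _ hP0.ne']
  refine ⟨?_, hval⟩
  intro P hP0
  rw [hval, hg, key P hP0]
  apply mul_le_mul_of_nonneg_left _ hN'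
  apply Real.logb_le_logb_of_le (by norm_num) (by positivity)
  have h3 : 2 * s * P ≤ t₁ * t₂ + (1 - α) * P ^ 2 := by
    apply le_of_mul_le_mul_left _ hb
    nlinarith [sq_nonneg ((1 - α) * P - s)]
  have h4 : α * (t₁ - t₂) * P / ((t₂ + (1 - α) * P) * (t₁ + P))
      ≤ α * (t₁ - t₂) / (t₂ + (1 - α) * t₁ + 2 * s) := by
    rw [div_le_div_iff₀ (by positivity) (by positivity), mul_assoc (α * (t₁ - t₂))]
    apply mul_le_mul_of_nonneg_left _ (by positivity)
    nlinarith
  linarith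
end

section
/- Let α ∈ (0,1), let 0 < t₂ < t₁ be reals, and let N be a positive integer. For P > 0 define g(P) = N·log₂( ((t₂ + P)·(t₁ + (1−α)·P)) / ((t₂ + (1−α)·P)·(t₁ + P)) ), and set P* = √(t₁·t₂/(1−α)). Then g is strictly increasing on the interval (0, P*) and strictly decreasing on the interval (P*, ∞); moreover g(P) → 0 as P → ∞. -/
open Filter

/-- For `α ∈ (0,1)`, `0 < t₂ < t₁`, and the sum-rate loss
`g P = N log₂(((t₂+P)(t₁+(1-α)P)) / ((t₂+(1-α)P)(t₁+P)))` with `P* = √(t₁ t₂/(1-α))`,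
`g` is strictly increasing on `(0, P*)`, strictly decreasing on `(P*, ∞)`, and `g P → 0` as
`P → ∞`. -/
theorem stmt6 (α t₁ t₂ : ℝ) (hα : α ∈ Set.Ioo (0 : ℝ) 1) (ht₂ : 0 < t₂) (ht : t₂ < t₁)
    (N : ℕ) (hN : 0 < N)
    (g : ℝ → ℝ)
    (hg : ∀ P, g P = (N : ℝ) * Real.logb 2
      (((t₂ + P) * (t₁ + (1 - α) * P)) / ((t₂ + (1 - α) * P) * (t₁ + P))))
    (Pstar : ℝ) (hPstar : Pstar = Real.sqrt (t₁ * t₂ / (1 - α))) :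
    StrictMonoOn g (Set.Ioo 0 Pstar) ∧ StrictAntiOn g (Set.Ioi Pstar) ∧
      Tendsto g atTop (nhds 0) := by
  obtain ⟨hα0, hα1⟩ := hα
  have hb : 0 < 1 - α := by linarith
  have ht₁ : 0 < t₁ := ht₂.trans ht
  have hN' : (0 : ℝ) < N := by exact_mod_cast hN
  have hS0 : 0 ≤ Pstar := hPstar ▸ Real.sqrt_nonneg _
  have hS : (1 - α) * (Pstar * Pstar) = t₁ * t₂ := by
    rw [hPstar, Real.mul_self_sqrt (by positivity)]
    field_simp
  have key : ∀ x y : ℝ, (t₂ + y) * (t₁ + (1 - α) * y) * ((t₂ + (1 - α) * x) * (t₁ + x))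
      - (t₂ + x) * (t₁ + (1 - α) * x) * ((t₂ + (1 - α) * y) * (t₁ + y))
      = α * (t₁ - t₂) * (y - x) * (t₁ * t₂ - (1 - α) * (x * y)) := by
    intro x y; ring
  have hc : 0 < α * (t₁ - t₂) := mul_pos hα0 (by linarith)
  refine ⟨?_, ?_, ?_⟩
  · intro x hx y hy hxy
    obtain ⟨hx0, hx1⟩ := hx
    obtain ⟨hy0, hy1⟩ := hy
    rw [hg, hg]
    refine mul_lt_mul_of_pos_left ?_ hN'
    refine Real.logb_lt_logb (by norm_num) (by positivity) ?_
    rw [div_lt_div_iff₀ (by positivity) (by positivity)]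
    have h1 : x * y < Pstar * Pstar := mul_lt_mul'' hx1 hy1 hx0.le hy0.le
    have h2 := mul_lt_mul_of_pos_left h1 hb
    have h3 : 0 < α * (t₁ - t₂) * (y - x) * (t₁ * t₂ - (1 - α) * (x * y)) :=
      mul_pos (mul_pos hc (by linarith)) (by linarith)
    linarith [key x y]
  · intro x hx y hy hxy
    have hx1 : Pstar < x := hx
    have hy1 : Pstar < y := hy
    have hx0 : 0 < x := by linarith
    have hy0 : 0 < y := by linarith
    rw [hg, hg]
    refine mul_lt_mul_of_pos_left ?_ hN'
    refine Real.logb_lt_logb (by norm_num) (by positivity) ?_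
    rw [div_lt_div_iff₀ (by positivity) (by positivity)]
    have h1 : Pstar * Pstar < x * y := mul_lt_mul'' hx1 hy1 hS0 hS0
    have h2 := mul_lt_mul_of_pos_left h1 hb
    have h3 : 0 < α * (t₁ - t₂) * (y - x) * ((1 - α) * (x * y) - t₁ * t₂) :=
      mul_pos (mul_pos hc (by linarith)) (by linarith)
    linarith [key x y]
  · have hlim : ∀ t c : ℝ, Tendsto (fun P : ℝ => t / P + c) atTop (nhds c) := by
      intro t c
      simpa using (tendsto_const_nhds (x := t)).div_atTop tendsto_id |>.add_const c
    have h1 : Tendsto (fun P : ℝ => ((t₂ / P + 1) * (t₁ / P + (1 - α))) /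
        ((t₂ / P + (1 - α)) * (t₁ / P + 1))) atTop (nhds 1) := by
      have h := ((hlim t₂ 1).mul (hlim t₁ (1 - α))).div
        ((hlim t₂ (1 - α)).mul (hlim t₁ 1)) (by simpa using hb.ne')
      have e : (1 * (1 - α)) / ((1 - α) * 1) = 1 := by
        rw [one_mul, mul_one, div_self hb.ne']
      rw [e] at h
      exact h
    have h2 : Tendsto (fun P : ℝ => ((t₂ + P) * (t₁ + (1 - α) * P)) /
        ((t₂ + (1 - α) * P) * (t₁ + P))) atTop (nhds 1) := by
      refine h1.congr' ?_
      filter_upwards [eventually_gt_atTop 0] with P hP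
      have p1 : 0 < t₂ + (1 - α) * P := by positivity
      have p2 : 0 < t₁ + P := by positivity
      have q : ∀ t c : ℝ, t / P + c = (t + c * P) / P := by
        intro t c; field_simp
      rw [q, q, q, q, one_mul]
      field_simp
    have h3 := ((Real.continuousAt_log one_ne_zero).tendsto.comp h2).div_const (Real.log 2)
      |>.const_mul (N : ℝ)
    have e : g = fun P => (N : ℝ) * (Real.log (((t₂ + P) * (t₁ + (1 - α) * P)) /
        ((t₂ + (1 - α) * P) * (t₁ + P))) / Real.log 2) := by
      funext P; rw [hg]; rfl
    rw [e]
    simpa using h3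
end

section
/- Let 0 < t₂ < t₁ be reals. Define for α ∈ (0,1) the maximum sum-rate loss per user h(α) = log₂(1 + α·(t₁ − t₂)/(t₂ + (1−α)·t₁ + 2·√((1−α)·t₁·t₂))). Then h is strictly increasing on (0,1), h(α) → log₂(t₁/t₂) as α → 1⁻, and consequently h(α) < log₂(t₁/t₂) for every α ∈ (0,1); that is, the maximum rate loss under coarse quantization (α < 1) is strictly smaller than its high-resolution (α → 1) value. -/
open Filter

/-- For `0 < t₂ < t₁` and the maximum per-user sum-rate loss
`h α = log₂(1 + α(t₁-t₂)/(t₂+(1-α)t₁+2√((1-α)t₁t₂)))`, the function `h` is strictly increasing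
on `(0,1)`, tends to `log₂(t₁/t₂)` as `α → 1⁻`, and `h α < log₂(t₁/t₂)` for every
`α ∈ (0,1)`. -/
theorem stmt7 (t₁ t₂ : ℝ) (ht₂ : 0 < t₂) (ht : t₂ < t₁)
    (h : ℝ → ℝ)
    (hh : ∀ α, h α = Real.logb 2
      (1 + α * (t₁ - t₂) / (t₂ + (1 - α) * t₁ + 2 * Real.sqrt ((1 - α) * t₁ * t₂)))) :
    StrictMonoOn h (Set.Ioo 0 1) ∧
      Tendsto h (nhdsWithin 1 (Set.Iio 1)) (nhds (Real.logb 2 (t₁ / t₂))) ∧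
      ∀ α ∈ Set.Ioo (0 : ℝ) 1, h α < Real.logb 2 (t₁ / t₂) := by
  have ht₁ : 0 < t₁ := ht₂.trans ht
  have hpos : ∀ α : ℝ, α ≤ 1 →
      0 < t₂ + (1 - α) * t₁ + 2 * Real.sqrt ((1 - α) * t₁ * t₂) := by
    intro α hα
    have h1 : 0 ≤ (1 - α) * t₁ := mul_nonneg (by linarith) ht₁.le
    have h2 := Real.sqrt_nonneg ((1 - α) * t₁ * t₂)
    linarith
  have hmono : StrictMonoOn h (Set.Ioc 0 1) := by
    intro a ha b hb hab
    rw [hh, hh]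
    have pa := hpos a ha.2
    have pb := hpos b hb.2
    have hd : 0 < t₁ - t₂ := by linarith
    have h1 : 0 < a * (t₁ - t₂) := mul_pos ha.1 hd
    have hs : Real.sqrt ((1 - b) * t₁ * t₂) ≤ Real.sqrt ((1 - a) * t₁ * t₂) := by
      apply Real.sqrt_le_sqrt
      gcongr
    have hm : (1 - b) * t₁ ≤ (1 - a) * t₁ := by gcongr
    have hlt : a * (t₁ - t₂) / (t₂ + (1 - a) * t₁ + 2 * Real.sqrt ((1 - a) * t₁ * t₂)) <
        b * (t₁ - t₂) / (t₂ + (1 - b) * t₁ + 2 * Real.sqrt ((1 - b) * t₁ * t₂)) := by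
      apply div_lt_div₀ _ _ _ pb
      · exact mul_lt_mul_of_pos_right hab hd
      · linarith
      · exact (mul_pos hb.1 hd).le
    have := div_pos h1 pa
    exact Real.logb_lt_logb (by norm_num) (by linarith) (by linarith)
  have hone : h 1 = Real.logb 2 (t₁ / t₂) := by
    rw [hh]
    congr 1
    simp
    field_simp
    ring
  refine ⟨hmono.mono Set.Ioo_subset_Ioc_self, ?_, ?_⟩
  · rw [← hone]
    have hc : ContinuousAt h 1 := by
      rw [funext hh]
      have p1 := hpos 1 le_rfl
      have hq : 0 < 1 * (t₁ - t₂) / (t₂ + (1 - 1) * t₁ + 2 * Real.sqrt ((1 - 1) * t₁ * t₂)) :=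
        div_pos (by linarith) p1
      unfold Real.logb
      apply ContinuousAt.div_const
      apply ContinuousAt.log
      · apply ContinuousAt.add continuousAt_const
        apply ContinuousAt.div
        · fun_prop
        · fun_prop
        · exact p1.ne'
      · linarith
    exact hc.tendsto.mono_left nhdsWithin_le_nhds
  · intro α hα
    rw [← hone]
    exact hmono ⟨hα.1, hα.2.le⟩ ⟨one_pos, le_rfl⟩ hα.2
end

section
/- Let V be a nonempty finite set and f : 2^V → ℝ a set function that is normalized (f(∅) = 0), nonnegative, monotone (A ⊆ B implies f(A) ≤ f(B)), and submodular (for all A ⊆ B ⊆ V and v ∈ V \ B, f(A ∪ {v}) − f(A) ≥ f(B ∪ {v}) − f(B)). Let k ≤ |V| and let A_G be obtained by the greedy procedure: A₀ = ∅ and A_{t+1} = A_t ∪ {a_t}, where a_t ∈ V \ A_t maximizes f(A_t ∪ {a}) over a ∈ V \ A_t, with A_G = A_k. Then f(A_G) ≥ (1 − 1/e) · f(A*), where A* is any subset of V with |A*| = k maximizing f among subsets of size k, and e is Euler's number. -/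
theorem union_gain_le {V : Type*} [DecidableEq V] (f : Finset V → ℝ)
    (hsub : ∀ A B : Finset V, A ⊆ B → ∀ v ∉ B,
      f (insert v B) - f B ≤ f (insert v A) - f A)
    (S : Finset V) (d : ℝ) (hd : 0 ≤ d) (h : ∀ b ∉ S, f (insert b S) - f S ≤ d)
    (T : Finset V) : f (S ∪ T) - f S ≤ T.card * d := by
  induction T using Finset.induction_on with
  | empty => simp
  | insert b T hb ih =>
    rw [Finset.card_insert_of_notMem hb, Finset.union_insert]
    push_cast
    by_cases hbS : b ∈ S
    · rw [Finset.insert_eq_of_mem (Finset.mem_union_left _ hbS)]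
      linarith
    · have h1 := hsub S (S ∪ T) Finset.subset_union_left b (by simp [hbS, hb])
      have h2 := h b hbS
      linarith

/-- (Nemhauser–Wolsey–Fisher) For a normalized, nonnegative, monotone and
submodular set function `f` on a nonempty finite ground set `V`, the greedy procedure
(`A 0 = ∅`, at each of `k` steps insert an element maximizing the function value) produces a set
`A k` with `f (A k) ≥ (1 - 1/e) f A*`, where `A*` is an optimal subset of cardinality `k`. -/
theorem stmt8 {V : Type*} [Fintype V] [DecidableEq V] [Nonempty V]
    (f : Finset V → ℝ)
    (hnorm : f ∅ = 0)
    (hnonneg : ∀ A : Finset V, 0 ≤ f A)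
    (hmono : ∀ A B : Finset V, A ⊆ B → f A ≤ f B)
    (hsub : ∀ A B : Finset V, A ⊆ B → ∀ v ∉ B,
      f (insert v B) - f B ≤ f (insert v A) - f A)
    (k : ℕ) (hk : k ≤ Fintype.card V)
    (A : ℕ → Finset V) (hA0 : A 0 = ∅)
    (hgreedy : ∀ t < k, ∃ a ∉ A t, A (t + 1) = insert a (A t) ∧
      ∀ b ∉ A t, f (insert b (A t)) ≤ f (insert a (A t)))
    (Astar : Finset V) (hcard : Astar.card = k)
    (hopt : ∀ B : Finset V, B.card = k → f B ≤ f Astar) :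
    (1 - 1 / Real.exp 1) * f Astar ≤ f (A k) := by
  rcases Nat.eq_zero_or_pos k with hk0 | hkpos
  · subst hk0
    rw [Finset.card_eq_zero] at hcard
    rw [hcard, hA0, hnorm, mul_zero]
  have hkR : (1 : ℝ) ≤ k := by exact_mod_cast hkpos
  have hkR0 : (0 : ℝ) < k := by linarith
  have hq : 0 ≤ 1 - 1 / (k : ℝ) := by
    have : 1 / (k : ℝ) ≤ 1 := by rw [div_le_one hkR0]; exact hkR
    linarith
  have key : ∀ t ≤ k, f Astar - f (A t) ≤ (1 - 1 / (k : ℝ)) ^ t * f Astar := by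
    intro t
    induction t with
    | zero => intro _; simp [hA0, hnorm]
    | succ t ih =>
      intro ht
      have ih' := ih (by omega)
      obtain ⟨a, -, hA, hmax⟩ := hgreedy t (by omega)
      have hd : 0 ≤ f (A (t + 1)) - f (A t) := by
        rw [hA]; linarith [hmono (A t) (insert a (A t)) (Finset.subset_insert _ _)]
      have h1 := union_gain_le f hsub (A t) _ hd
        (fun b hb => by rw [hA]; linarith [hmax b hb]) Astar
      rw [hcard] at h1
      have h2 := hmono Astar (A t ∪ Astar) Finset.subset_union_right
      have h3 : (f Astar - f (A t)) / k ≤ f (A (t + 1)) - f (A t) := by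
        rw [div_le_iff₀ hkR0]; linarith
      calc f Astar - f (A (t + 1)) ≤ (1 - 1 / (k : ℝ)) * (f Astar - f (A t)) := by
            have : (1 - 1 / (k : ℝ)) * (f Astar - f (A t))
              = (f Astar - f (A t)) - (f Astar - f (A t)) / k := by ring
            linarith
        _ ≤ (1 - 1 / (k : ℝ)) * ((1 - 1 / (k : ℝ)) ^ t * f Astar) :=
            mul_le_mul_of_nonneg_left ih' hq
        _ = _ := by ring
  have hfin := key k le_rfl
  have hexp : (1 - 1 / (k : ℝ)) ^ k ≤ 1 / Real.exp 1 := by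
    have := Real.one_sub_div_pow_le_exp_neg (n := k) (t := 1) hkR
    rwa [Real.exp_neg, ← one_div] at this
  have := mul_le_mul_of_nonneg_right hexp (hnonneg Astar)
  linarith
end

section
/- Let H ∈ ℂ^{N×M} be a complex matrix with i-th row f_iᴴ, let ρ > 0 and α ∈ (0,1), and let D ∈ ℝ^{N×N} be the diagonal matrix with entries d_i = 1 + ρ(1−α)·‖f_i‖². For a subset K ⊆ {1,…,N}, let H_K be the |K|×M row submatrix of H and D_K the corresponding |K|×|K| diagonal block, and define the quantized uplink capacity R(K) = log₂ det( I_{|K|} + ρ·α²·( α²·I_{|K|} + α(1−α)·diag(ρ·H_K·H_Kᴴ + I_{|K|}) )⁻¹ · H_K·H_Kᴴ ). Then: (i) R(K) = log₂ det( I_{|K|} + ρ·α·(D_K)⁻¹·H_K·H_Kᴴ ); and (ii) the set function K ↦ R(K) is normalized (R(∅) = 0), monotone nondecreasing, and submodular. -/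
open Matrix

/-- The row submatrix of `H` given by the rows indexed by the subset `K`. -/
noncomputable def stmt10.rowSub {N M : ℕ} (H : Matrix (Fin N) (Fin M) ℂ)
    (K : Finset (Fin N)) : Matrix K (Fin M) ℂ :=
  H.submatrix (fun i => (i : Fin N)) id

/-- The quantized uplink capacity
`R(K) = log₂ det(I + ρα² (α² I + α(1-α) diag(ρ H_K H_Kᴴ + I))⁻¹ H_K H_Kᴴ)`. -/
noncomputable def stmt10.Rq {N M : ℕ} (H : Matrix (Fin N) (Fin M) ℂ) (ρ α : ℝ)
    (K : Finset (Fin N)) : ℝ :=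
  Real.logb 2 ((Matrix.det
    ((1 : Matrix K K ℂ) + ((ρ : ℂ) * (α : ℂ) ^ 2) •
      (((α : ℂ) ^ 2 • (1 : Matrix K K ℂ)) + ((α : ℂ) * (1 - (α : ℂ))) •
        Matrix.diagonal (Matrix.diag
          ((ρ : ℂ) • (stmt10.rowSub H K * (stmt10.rowSub H K)ᴴ) + 1)))⁻¹ *
      (stmt10.rowSub H K * (stmt10.rowSub H K)ᴴ))).re)

/-- The simplified form `log₂ det(I + ρα (D_K)⁻¹ H_K H_Kᴴ)`. -/
noncomputable def stmt10.RD {N M : ℕ} (H : Matrix (Fin N) (Fin M) ℂ) (ρ α : ℝ)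
    (d : Fin N → ℝ) (K : Finset (Fin N)) : ℝ :=
  Real.logb 2 ((Matrix.det
    ((1 : Matrix K K ℂ) + ((ρ : ℂ) * (α : ℂ)) •
      (Matrix.diagonal (fun i : K => ((d i.1 : ℝ) : ℂ)))⁻¹ *
      (stmt10.rowSub H K * (stmt10.rowSub H K)ᴴ))).re)

open scoped ComplexOrder

namespace Stmt10Aux

lemma diag_inv {ι : Type*} [Fintype ι] [DecidableEq ι] (v : ι → ℂ) (hv : ∀ i, v i ≠ 0) :
    (Matrix.diagonal v)⁻¹ = Matrix.diagonal (fun i => (v i)⁻¹) := by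
  apply Matrix.inv_eq_right_inv
  rw [Matrix.diagonal_mul_diagonal, ← Matrix.diagonal_one]
  congr 1
  funext i
  exact mul_inv_cancel₀ (hv i)

/-- The Gram-type matrix. -/
noncomputable def G {N M : ℕ} (H : Matrix (Fin N) (Fin M) ℂ) (c : Fin N → ℝ)
    (K : Finset (Fin N)) : Matrix (Fin M) (Fin M) ℂ :=
  1 + ∑ i ∈ K, ((c i : ℝ) : ℂ) • Matrix.vecMulVec (star (H i)) (H i)

lemma term_psd {N M : ℕ} (H : Matrix (Fin N) (Fin M) ℂ) (c : Fin N → ℝ) (hc : ∀ i, 0 < c i)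
    (i : Fin N) : (((c i : ℝ) : ℂ) • Matrix.vecMulVec (star (H i)) (H i)).PosSemidef := by
  refine Matrix.PosSemidef.smul ?_ (by exact_mod_cast (hc i).le)
  exact Matrix.posSemidef_vecMulVec_star_self (H i)

lemma sum_psd {N M : ℕ} (H : Matrix (Fin N) (Fin M) ℂ) (c : Fin N → ℝ) (hc : ∀ i, 0 < c i)
    (K : Finset (Fin N)) :
    (∑ i ∈ K, ((c i : ℝ) : ℂ) • Matrix.vecMulVec (star (H i)) (H i)).PosSemidef :=
  Matrix.posSemidef_sum K (fun i _ => term_psd H c hc i)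

lemma G_pd {N M : ℕ} (H : Matrix (Fin N) (Fin M) ℂ) (c : Fin N → ℝ) (hc : ∀ i, 0 < c i)
    (K : Finset (Fin N)) : (G H c K).PosDef :=
  Matrix.PosDef.one.add_posSemidef (sum_psd H c hc K)

lemma G_sub {N M : ℕ} (H : Matrix (Fin N) (Fin M) ℂ) (c : Fin N → ℝ) (hc : ∀ i, 0 < c i)
    (A B : Finset (Fin N)) (h : A ⊆ B) : (G H c B - G H c A).PosSemidef := by
  have : G H c B - G H c A
      = ∑ i ∈ B \ A, ((c i : ℝ) : ℂ) • Matrix.vecMulVec (star (H i)) (H i) := by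
    unfold G
    rw [← Finset.sum_sdiff h]
    abel
  rw [this]
  exact sum_psd H c hc _

lemma inv_anti {n : Type*} [Fintype n] [DecidableEq n] (P Q : Matrix n n ℂ)
    (hP : P.PosDef) (hQ : Q.PosDef) (h : (Q - P).PosSemidef) : (P⁻¹ - Q⁻¹).PosSemidef := by
  have h1 : P * P⁻¹ = 1 := Matrix.mul_nonsing_inv _ ((Matrix.isUnit_iff_isUnit_det _).1 hP.isUnit)
  have h2 : P⁻¹ * P = 1 := Matrix.nonsing_inv_mul _ ((Matrix.isUnit_iff_isUnit_det _).1 hP.isUnit)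
  have h3 : Q⁻¹ * Q = 1 := Matrix.nonsing_inv_mul _ ((Matrix.isUnit_iff_isUnit_det _).1 hQ.isUnit)
  have e : P⁻¹ - Q⁻¹ = (P⁻¹ - Q⁻¹) * P * (P⁻¹ - Q⁻¹)ᴴ + Q⁻¹ * (Q - P) * (Q⁻¹)ᴴ := by
    rw [Matrix.conjTranspose_sub, hP.inv.isHermitian.eq, hQ.inv.isHermitian.eq]
    simp only [sub_mul, mul_sub, h2, h3, one_mul, Matrix.mul_assoc, h1, mul_one]
    abel
  rw [e]
  exact (hP.posSemidef.mul_mul_conjTranspose_same _).add (h.mul_mul_conjTranspose_same _)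

lemma det_insert {N M : ℕ} (H : Matrix (Fin N) (Fin M) ℂ) (c : Fin N → ℝ) (hc : ∀ i, 0 < c i)
    (K : Finset (Fin N)) (s : Fin N) (hs : s ∉ K) :
    (G H c (insert s K)).det = (G H c K).det *
      (1 + (c s : ℂ) * (star (star (H s)) ⬝ᵥ ((G H c K)⁻¹ *ᵥ (star (H s))))) := by
  have hu := (Matrix.isUnit_iff_isUnit_det _).1 (G_pd H c hc K).isUnit
  have e : G H c (insert s K) = G H c K +
      Matrix.replicateCol Unit ((c s : ℂ) • star (H s)) * Matrix.replicateRow Unit (H s) := by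
    unfold G
    rw [Finset.sum_insert hs]
    have : ((c s : ℝ) : ℂ) • Matrix.vecMulVec (star (H s)) (H s) =
      Matrix.replicateCol Unit ((c s : ℂ) • star (H s)) * Matrix.replicateRow Unit (H s) := by
      ext i j
      simp [Matrix.mul_apply, Matrix.vecMulVec_apply, mul_assoc]
    rw [this]; abel
  rw [e, Matrix.det_add_replicateCol_mul_replicateRow hu]
  congr 1
  rw [Matrix.det_unique]
  simp only [Matrix.add_apply, Matrix.one_apply_eq, star_star]
  rw [Matrix.mul_assoc, ← Matrix.replicateCol_mulVec, Matrix.mulVec_smul]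
  simp [Matrix.mul_apply, dotProduct, Finset.mul_sum]
  refine Finset.sum_congr rfl fun i _ => ?_
  ring

lemma det_D {N M : ℕ} (H : Matrix (Fin N) (Fin M) ℂ) (ρ α : ℝ) (d : Fin N → ℝ)
    (hd : ∀ i, d i ≠ 0) (K : Finset (Fin N)) :
    Matrix.det ((1 : Matrix K K ℂ) + ((ρ : ℂ) * (α : ℂ)) •
      (Matrix.diagonal (fun i : K => ((d i.1 : ℝ) : ℂ)))⁻¹ *
      (stmt10.rowSub H K * (stmt10.rowSub H K)ᴴ)) = (G H (fun i => ρ * α / d i) K).det := by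
  rw [diag_inv _ (fun i => by exact_mod_cast hd i.1), ← Matrix.mul_assoc,
    Matrix.det_one_add_mul_comm]
  unfold G
  congr 2
  ext j k
  rw [← Finset.sum_coe_sort]
  simp only [Matrix.mul_apply, Matrix.sum_apply, Matrix.smul_apply, Matrix.vecMulVec_apply,
    Matrix.diagonal_apply, Matrix.conjTranspose_apply, stmt10.rowSub, Matrix.submatrix_apply]
  refine Finset.sum_congr rfl fun i _ => ?_
  simp
  ring

lemma det_eq {N M : ℕ} (H : Matrix (Fin N) (Fin M) ℂ) (ρ α : ℝ) (hα : α ≠ 0) (d : Fin N → ℝ)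
    (hd : ∀ i, d i = 1 + ρ * (1 - α) * ∑ j, ‖H i j‖ ^ 2) (hd0 : ∀ i, d i ≠ 0)
    (K : Finset (Fin N)) : stmt10.Rq H ρ α K = stmt10.RD H ρ α d K := by
  have e : (((α : ℂ) ^ 2 • (1 : Matrix K K ℂ)) + ((α : ℂ) * (1 - (α : ℂ))) •
        Matrix.diagonal (Matrix.diag
          ((ρ : ℂ) • (stmt10.rowSub H K * (stmt10.rowSub H K)ᴴ) + 1)))
      = Matrix.diagonal (fun i : K => (α : ℂ) * ((d i.1 : ℝ) : ℂ)) := by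
    rw [← Matrix.diagonal_one, ← Matrix.diagonal_smul, ← Matrix.diagonal_smul,
      Matrix.diagonal_add]
    congr 1
    funext i
    have hs : (stmt10.rowSub H K * (stmt10.rowSub H K)ᴴ) i i
        = ((∑ j, ‖H i.1 j‖ ^ 2 : ℝ) : ℂ) := by
      simp only [Matrix.mul_apply, Matrix.conjTranspose_apply, stmt10.rowSub,
        Matrix.submatrix_apply, id]
      push_cast
      refine Finset.sum_congr rfl fun j _ => ?_
      exact Complex.mul_conj' _
    simp only [Pi.smul_apply, Matrix.diag_apply, Matrix.add_apply, Matrix.smul_apply, hs,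
      Matrix.diagonal_apply_eq, smul_eq_mul, hd]
    push_cast
    ring
  have hα' : (α : ℂ) ≠ 0 := by exact_mod_cast hα
  have hd' : ∀ i, ((d i : ℝ) : ℂ) ≠ 0 := fun i => by exact_mod_cast hd0 i
  unfold stmt10.Rq stmt10.RD
  rw [e, diag_inv (fun i : K => (α : ℂ) * ((d i.1 : ℝ) : ℂ)) (fun i => mul_ne_zero hα' (hd' i.1)), 
    diag_inv (fun i : K => ((d i.1 : ℝ) : ℂ)) (fun i => hd' i.1),
    ← Matrix.diagonal_smul, ← Matrix.diagonal_smul]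
  congr 6
  funext i
  have := hd' i.1
  simp only [Pi.smul_apply, smul_eq_mul]
  field_simp

end Stmt10Aux

/-- For `H : ℂ^{N×M}` with rows `fᵢᴴ`, `ρ > 0`, `α ∈ (0,1)`, and
`dᵢ = 1 + ρ(1-α)‖fᵢ‖²`: (i) the quantized uplink capacity `R(K)` equals
`log₂ det(I + ρα (D_K)⁻¹ H_K H_Kᴴ)`; (ii) `K ↦ R(K)` is normalized, monotone nondecreasing,
and submodular. -/
theorem stmt10 (N M : ℕ) (H : Matrix (Fin N) (Fin M) ℂ) (ρ α : ℝ) (hρ : 0 < ρ)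
    (hα : α ∈ Set.Ioo (0 : ℝ) 1)
    (d : Fin N → ℝ) (hd : ∀ i, d i = 1 + ρ * (1 - α) * ∑ j, ‖H i j‖ ^ 2) :
    (∀ K : Finset (Fin N), stmt10.Rq H ρ α K = stmt10.RD H ρ α d K) ∧
      stmt10.Rq H ρ α ∅ = 0 ∧
      (∀ A B : Finset (Fin N), A ⊆ B → stmt10.Rq H ρ α A ≤ stmt10.Rq H ρ α B) ∧
      (∀ A B : Finset (Fin N), A ⊆ B → ∀ s ∉ B,
        stmt10.Rq H ρ α (insert s B) - stmt10.Rq H ρ α B ≤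
          stmt10.Rq H ρ α (insert s A) - stmt10.Rq H ρ α A) := by
  obtain ⟨hα0, hα1⟩ := hα
  have hdpos : ∀ i, 0 < d i := fun i => by
    rw [hd]
    have : 0 ≤ ∑ j, ‖H i j‖ ^ 2 := Finset.sum_nonneg fun _ _ => by positivity
    have : 0 ≤ 1 - α := by linarith
    positivity
  have hR := Stmt10Aux.det_eq H ρ α hα0.ne' d hd (fun i => (hdpos i).ne')
  set c : Fin N → ℝ := fun i => ρ * α / d i with hcdef
  have hc : ∀ i, 0 < c i := fun i => div_pos (mul_pos hρ hα0) (hdpos i)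
  have hG : ∀ K, stmt10.Rq H ρ α K = Real.logb 2 (Stmt10Aux.G H c K).det.re := fun K => by
    rw [hR, stmt10.RD, Stmt10Aux.det_D H ρ α d (fun i => (hdpos i).ne')]
  have hpos : ∀ K, 0 < (Stmt10Aux.G H c K).det.re := fun K =>
    (Complex.pos_iff.1 (Stmt10Aux.G_pd H c hc K).det_pos).1
  let q : Finset (Fin N) → Fin N → ℝ := fun K s =>
    (star (star (H s)) ⬝ᵥ ((Stmt10Aux.G H c K)⁻¹ *ᵥ (star (H s)))).re
  have hq0 : ∀ K s, 0 ≤ q K s := fun K s =>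
    (Stmt10Aux.G_pd H c hc K).inv.posSemidef.re_dotProduct_nonneg (star (H s))
  have hq : ∀ A B, A ⊆ B → ∀ s, q B s ≤ q A s := fun A B h s => by
    have := (Stmt10Aux.inv_anti _ _ (Stmt10Aux.G_pd H c hc A) (Stmt10Aux.G_pd H c hc B)
      (Stmt10Aux.G_sub H c hc A B h)).re_dotProduct_nonneg (star (H s))
    rw [Matrix.sub_mulVec, dotProduct_sub] at this
    simpa [q] using this
  have hins : ∀ K s, s ∉ K →
      stmt10.Rq H ρ α (insert s K) = stmt10.Rq H ρ α K + Real.logb 2 (1 + c s * q K s) := by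
    intro K s hs
    have h1 : (Stmt10Aux.G H c (insert s K)).det.re
        = (Stmt10Aux.G H c K).det.re * (1 + c s * q K s) := by
      have him : (Stmt10Aux.G H c K).det.im = 0 :=
        (Complex.pos_iff.1 (Stmt10Aux.G_pd H c hc K).det_pos).2.symm
      rw [Stmt10Aux.det_insert H c hc K s hs, Complex.mul_re, him]
      simp [q]
    have : 0 < 1 + c s * q K s := by
      have := mul_nonneg (hc s).le (hq0 K s)
      linarith
    rw [hG, hG, h1, Real.logb_mul (hpos K).ne' this.ne']
  refine ⟨hR, ?_, ?_, ?_⟩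
  · rw [hG]
    simp [Stmt10Aux.G]
  · intro A B hAB
    have key : ∀ C : Finset (Fin N), stmt10.Rq H ρ α A ≤ stmt10.Rq H ρ α (C ∪ A) := by
      intro C
      induction C using Finset.induction_on with
      | empty => simp
      | insert s C hs ih =>
        rw [Finset.insert_union]
        by_cases hm : s ∈ C ∪ A
        · rwa [Finset.insert_eq_of_mem hm]
        · rw [hins _ s hm]
          have h1 := mul_nonneg (hc s).le (hq0 (C ∪ A) s)
          have := Real.logb_nonneg (b := 2) (by norm_num)
            (by linarith : 1 ≤ 1 + c s * q (C ∪ A) s)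
          linarith
    have := key B
    rwa [Finset.union_eq_left.2 hAB] at this
  · intro A B hAB s hs
    rw [hins B s hs, hins A s (fun h => hs (hAB h))]
    have h1 := mul_nonneg (hc s).le (hq0 B s)
    have h2 := mul_le_mul_of_nonneg_left (hq A B hAB s) (hc s).le
    have := Real.logb_le_logb_of_le (b := 2) (by norm_num) (by linarith : 0 < 1 + c s * q B s)
      (by linarith : 1 + c s * q B s ≤ 1 + c s * q A s)
    linarith
end

section
/- Let H ∈ ℂ^{N×M}, ρ > 0, α ∈ (0,1), and define the quantized uplink capacity set function R(K) = log₂ det( I_{|K|} + ρ·α·(D_K)⁻¹·H_K·H_Kᴴ ) for K ⊆ {1,…,N}, where D is the diagonal matrix with entries d_i = 1 + ρ(1−α)·‖f_i‖² and f_iᴴ is the i-th row of H. Let N_r ≤ N and let K_G be the subset produced by greedy selection: K₀ = ∅ and K_{t+1} = K_t ∪ {j_t}, where j_t maximizes R(K_t ∪ {j}) over j ∈ {1,…,N} \ K_t, with K_G = K_{N_r}. Then R(K_G) ≥ (1 − 1/e) · R(K*), where K* maximizes R(K) over all subsets K with |K| = N_r. -/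
open Matrix

/-- The row submatrix of `H` given by the rows indexed by the subset `K`. -/
noncomputable def stmt11.rowSub {N M : ℕ} (H : Matrix (Fin N) (Fin M) ℂ)
    (K : Finset (Fin N)) : Matrix K (Fin M) ℂ :=
  H.submatrix (fun i => (i : Fin N)) id

/-- The quantized uplink capacity `R(K) = log₂ det(I + ρα (D_K)⁻¹ H_K H_Kᴴ)`, where `D` is the
diagonal matrix with entries `dᵢ`. -/
noncomputable def stmt11.R {N M : ℕ} (H : Matrix (Fin N) (Fin M) ℂ) (ρ α : ℝ)
    (d : Fin N → ℝ) (K : Finset (Fin N)) : ℝ :=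
  Real.logb 2 ((Matrix.det
    ((1 : Matrix K K ℂ) + ((ρ : ℂ) * (α : ℂ)) •
      (Matrix.diagonal (fun i : K => ((d i.1 : ℝ) : ℂ)))⁻¹ *
      (stmt11.rowSub H K * (stmt11.rowSub H K)ᴴ))).re)

section aux
open scoped ComplexOrder

theorem aux_inv_anti {n : Type*} [Fintype n] [DecidableEq n] {A P : Matrix n n ℂ}
    (hA : A.PosDef) (hP : P.PosSemidef) : (A⁻¹ - (A + P)⁻¹).PosSemidef := by
  have hB : (A + P).PosDef := hA.add_posSemidef hP
  have hAu : IsUnit A.det := (Matrix.isUnit_iff_isUnit_det _).1 hA.isUnit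
  have hBu : IsUnit (A + P).det := (Matrix.isUnit_iff_isUnit_det _).1 hB.isUnit
  have hZ := hA.inv.isHermitian
  have hY := hB.inv.isHermitian
  have h1 := Matrix.nonsing_inv_mul A hAu
  have h2 := Matrix.mul_nonsing_inv A hAu
  have h3 := Matrix.mul_nonsing_inv (A + P) hBu
  generalize A⁻¹ = Z at *
  generalize (A + P)⁻¹ = Y at *
  have key : Z - Y = (Z - Y)ᴴ * A * (Z - Y) + Yᴴ * P * Y := by
    rw [Matrix.conjTranspose_sub, hZ.eq, hY.eq]
    have e1 : Y * P * Y = Y - Y * A * Y := by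
      have : Y * ((A + P) * Y) = Y := by rw [h3, mul_one]
      have h4 : Y * ((A + P) * Y) = Y * A * Y + Y * P * Y := by noncomm_ring
      rw [h4] at this
      exact eq_sub_of_add_eq' this
    have e2 : (Z - Y) * A * (Z - Y) = Z * A * Z - Y * (A * Z) - Z * A * Y + Y * A * Y := by
      noncomm_ring
    rw [e1, e2, h1, h2]
    noncomm_ring
  rw [key]
  exact (hA.posSemidef.conjTranspose_mul_mul_same _).add (hP.conjTranspose_mul_mul_same _)

/-- The dual `M × M` matrix. -/
noncomputable def auxA {N M : ℕ} (H : Matrix (Fin N) (Fin M) ℂ) (c : Fin N → ℝ)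
    (K : Finset (Fin N)) : Matrix (Fin M) (Fin M) ℂ :=
  1 + ∑ i ∈ K, ((c i : ℝ) : ℂ) • vecMulVec (star (H i)) (H i)

theorem auxTerm_psd {N M : ℕ} (H : Matrix (Fin N) (Fin M) ℂ) (c : Fin N → ℝ)
    (hc : ∀ i, 0 < c i) (i : Fin N) :
    (((c i : ℝ) : ℂ) • vecMulVec (star (H i)) (H i)).PosSemidef :=
  (posSemidef_vecMulVec_star_self (H i)).smul (by exact_mod_cast (hc i).le)

theorem auxSum_psd {N M : ℕ} (H : Matrix (Fin N) (Fin M) ℂ) (c : Fin N → ℝ)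
    (hc : ∀ i, 0 < c i) (K : Finset (Fin N)) :
    (∑ i ∈ K, ((c i : ℝ) : ℂ) • vecMulVec (star (H i)) (H i)).PosSemidef :=
  posSemidef_sum _ (fun i _ => auxTerm_psd H c hc i)

theorem auxA_pd {N M : ℕ} (H : Matrix (Fin N) (Fin M) ℂ) (c : Fin N → ℝ)
    (hc : ∀ i, 0 < c i) (K : Finset (Fin N)) : (auxA H c K).PosDef :=
  Matrix.PosDef.one.add_posSemidef (auxSum_psd H c hc K)

theorem auxR_eq {N M : ℕ} (H : Matrix (Fin N) (Fin M) ℂ) (ρ α : ℝ) (d : Fin N → ℝ)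
    (hd : ∀ i, 0 < d i) (K : Finset (Fin N)) :
    stmt11.R H ρ α d K = Real.logb 2 (auxA H (fun i => ρ * α / d i) K).det.re := by
  unfold stmt11.R
  rw [← Matrix.mul_assoc, Matrix.det_one_add_mul_comm]
  congr 3
  unfold auxA
  congr 1
  have hinv : (Matrix.diagonal (fun i : K => ((d i.1 : ℝ) : ℂ)))⁻¹
      = Matrix.diagonal (fun i : K => ((d i.1 : ℝ) : ℂ)⁻¹) := by
    apply Matrix.inv_eq_left_inv
    rw [Matrix.diagonal_mul_diagonal, ← Matrix.diagonal_one]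
    congr 1
    funext i
    exact inv_mul_cancel₀ (by exact_mod_cast (hd i.1).ne')
  rw [hinv]
  ext a b
  rw [Matrix.sum_apply, ← Finset.sum_coe_sort K, Matrix.mul_apply]
  refine Finset.sum_congr rfl fun i _ => ?_
  rw [Matrix.smul_mul, Matrix.smul_apply, Matrix.smul_apply, Matrix.diagonal_mul]
  simp [stmt11.rowSub, Matrix.vecMulVec_apply]
  ring

/-- The quadratic form. -/
noncomputable def auxQ {N M : ℕ} (H : Matrix (Fin N) (Fin M) ℂ) (c : Fin N → ℝ)
    (j : Fin N) (K : Finset (Fin N)) : ℝ :=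
  (H j ⬝ᵥ ((auxA H c K)⁻¹ *ᵥ star (H j))).re

theorem auxQ_nonneg {N M : ℕ} (H : Matrix (Fin N) (Fin M) ℂ) (c : Fin N → ℝ)
    (hc : ∀ i, 0 < c i) (j : Fin N) (K : Finset (Fin N)) : 0 ≤ auxQ H c j K := by
  have := (auxA_pd H c hc K).inv.posSemidef.dotProduct_mulVec_nonneg (star (H j))
  rw [star_star] at this
  exact (Complex.le_def.1 this).1

theorem auxQ_anti {N M : ℕ} (H : Matrix (Fin N) (Fin M) ℂ) (c : Fin N → ℝ)
    (hc : ∀ i, 0 < c i) (j : Fin N) {K L : Finset (Fin N)} (hKL : K ⊆ L) :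
    auxQ H c j L ≤ auxQ H c j K := by
  have hL : auxA H c L = auxA H c K +
      ∑ i ∈ L \ K, ((c i : ℝ) : ℂ) • vecMulVec (star (H i)) (H i) := by
    unfold auxA
    rw [add_assoc, add_comm (∑ i ∈ K, _), Finset.sum_sdiff hKL]
  have := (aux_inv_anti (auxA_pd H c hc K)
    (auxSum_psd H c hc (L \ K))).dotProduct_mulVec_nonneg (star (H j))
  rw [← hL, star_star, Matrix.sub_mulVec, dotProduct_sub] at this
  have := (Complex.le_def.1 this).1
  rw [Complex.sub_re] at this
  unfold auxQ
  simpa using this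

theorem auxA_det_re_pos {N M : ℕ} (H : Matrix (Fin N) (Fin M) ℂ) (c : Fin N → ℝ)
    (hc : ∀ i, 0 < c i) (K : Finset (Fin N)) :
    0 < (auxA H c K).det.re ∧ (auxA H c K).det.im = 0 := by
  have := Complex.lt_def.1 (auxA_pd H c hc K).det_pos
  exact ⟨this.1, this.2.symm⟩

theorem auxA_insert {N M : ℕ} (H : Matrix (Fin N) (Fin M) ℂ) (c : Fin N → ℝ)
    (hc : ∀ i, 0 < c i) (K : Finset (Fin N)) (j : Fin N) (hj : j ∉ K) :
    (auxA H c (insert j K)).det.re = (auxA H c K).det.re * (1 + c j * auxQ H c j K) := by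
  have h1 : auxA H c (insert j K) = auxA H c K +
      replicateCol Unit (((c j : ℝ) : ℂ) • star (H j)) * replicateRow Unit (H j) := by
    unfold auxA
    rw [Finset.sum_insert hj, ← vecMulVec_eq, smul_vecMulVec]
    abel
  have hu : IsUnit (auxA H c K).det :=
    (Matrix.isUnit_iff_isUnit_det _).1 (auxA_pd H c hc K).isUnit
  rw [h1, det_add_replicateCol_mul_replicateRow hu, Complex.mul_re,
    (auxA_det_re_pos H c hc K).2, zero_mul, sub_zero]
  congr 1
  rw [Matrix.det_unique, Matrix.add_apply, Matrix.one_apply_eq, Matrix.mul_assoc]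
  have : (replicateRow Unit (H j) * ((auxA H c K)⁻¹ *
      replicateCol Unit (((c j : ℝ) : ℂ) • star (H j)))) default default
      = ((c j : ℝ) : ℂ) * (H j ⬝ᵥ ((auxA H c K)⁻¹ *ᵥ star (H j))) := by
    rw [← smul_eq_mul, ← dotProduct_smul, ← mulVec_smul]
    rfl
  rw [this, Complex.add_re, Complex.re_ofReal_mul]
  rfl

/-- Abstract greedy bound. -/
theorem aux_greedy {ι : Type*} [DecidableEq ι] (f : Finset ι → ℝ) (g : ι → Finset ι → ℝ)
    (h0 : f ∅ = 0) (hg0 : ∀ j K, 0 ≤ g j K) (hga : ∀ j K L, K ⊆ L → g j L ≤ g j K)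
    (hfg : ∀ j K, j ∉ K → f (insert j K) = f K + g j K)
    (n : ℕ) (K : ℕ → Finset ι) (hK0 : K 0 = ∅)
    (hgr : ∀ t < n, ∃ j ∉ K t, K (t + 1) = insert j (K t) ∧
      ∀ j' ∉ K t, f (insert j' (K t)) ≤ f (insert j (K t)))
    (S : Finset ι) (hS : S.card = n) :
    (1 - 1 / Real.exp 1) * f S ≤ f (K n) := by
  have hup : ∀ (T A : Finset ι), f A ≤ f (A ∪ T) ∧
      (Disjoint T A → f (A ∪ T) ≤ f A + ∑ j ∈ T, g j A) := by
    intro T A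
    induction T using Finset.induction_on with
    | empty => simp
    | insert j T hj ih =>
      rw [Finset.union_insert]
      by_cases hjA : j ∈ A ∪ T
      · rw [Finset.insert_eq_of_mem hjA]
        refine ⟨ih.1, fun hd => ?_⟩
        have hjA2 : j ∉ A := Finset.disjoint_left.1 hd (Finset.mem_insert_self _ _)
        simp [hj, hjA2] at hjA
      · rw [hfg _ _ hjA]
        refine ⟨by linarith [ih.1, hg0 j (A ∪ T)], fun hd => ?_⟩
        rw [Finset.sum_insert hj]
        have := ih.2 (hd.mono_left (Finset.subset_insert _ _))
        linarith [hga j A (A ∪ T) Finset.subset_union_left]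
  have hfS : 0 ≤ f S := by
    have := (hup S ∅).1
    simpa [h0] using this
  rcases Nat.eq_zero_or_pos n with rfl | hn
  · rw [Finset.card_eq_zero] at hS
    rw [hS, hK0, h0]; simp
  have hn' : (0 : ℝ) < n := by exact_mod_cast hn
  have hn1 : (1 : ℝ) ≤ n := by exact_mod_cast hn
  have hr : 0 ≤ 1 - 1 / (n : ℝ) := by
    rw [sub_nonneg, div_le_one hn']; exact hn1
  have hstep : ∀ t < n, f S - f (K (t + 1)) ≤ (1 - 1 / (n : ℝ)) * (f S - f (K t)) := by
    intro t ht
    obtain ⟨j, hj, hK, hmax⟩ := hgr t ht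
    rw [hK, hfg j _ hj]
    have a1 : f S ≤ f (K t ∪ (S \ K t)) := by
      rw [Finset.union_sdiff_self_eq_union, Finset.union_comm]
      exact (hup (K t) S).1
    have a2 := (hup (S \ K t) (K t)).2 Finset.sdiff_disjoint
    have a3 : ∑ i ∈ S \ K t, g i (K t) ≤ n * g j (K t) := by
      calc ∑ i ∈ S \ K t, g i (K t) ≤ ∑ i ∈ S \ K t, g j (K t) := by
            refine Finset.sum_le_sum fun i hi => ?_
            have hi2 := (Finset.mem_sdiff.1 hi).2
            have := hmax i hi2
            rw [hfg i _ hi2, hfg j _ hj] at this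
            linarith
        _ = ((S \ K t).card : ℝ) * g j (K t) := by simp
        _ ≤ n * g j (K t) := by
            refine mul_le_mul_of_nonneg_right ?_ (hg0 _ _)
            rw [← hS]
            exact_mod_cast Finset.card_le_card Finset.sdiff_subset
    have a4 : (f S - f (K t)) / n ≤ g j (K t) := by
      rw [div_le_iff₀ hn']; linarith
    have : (1 - 1 / (n : ℝ)) * (f S - f (K t)) = (f S - f (K t)) - (f S - f (K t)) / n := by
      ring
    linarith
  have hind : ∀ t ≤ n, f S - f (K t) ≤ (1 - 1 / (n : ℝ)) ^ t * f S := by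
    intro t
    induction t with
    | zero => intro _; simp [hK0, h0]
    | succ t ih =>
      intro ht
      have := mul_le_mul_of_nonneg_left (ih (by omega)) hr
      rw [pow_succ']
      linarith [hstep t (by omega)]
  have hexp : (1 - 1 / (n : ℝ)) ^ n ≤ 1 / Real.exp 1 := by
    have h1 : 1 - 1 / (n : ℝ) ≤ Real.exp (-(1 / (n : ℝ))) := by
      have := Real.add_one_le_exp (-(1 / (n : ℝ)))
      linarith
    calc (1 - 1 / (n : ℝ)) ^ n ≤ Real.exp (-(1 / (n : ℝ))) ^ n := pow_le_pow_left₀ hr h1 n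
      _ = 1 / Real.exp 1 := by
        rw [← Real.exp_nat_mul, one_div (Real.exp 1), ← Real.exp_neg]
        congr 1
        field_simp
  have := hind n le_rfl
  have := mul_le_mul_of_nonneg_right hexp hfS
  linarith

end aux

/-- For the quantized uplink capacity set function
`R(K) = log₂ det(I + ρα (D_K)⁻¹ H_K H_Kᴴ)` with `dᵢ = 1 + ρ(1-α)‖fᵢ‖²`, the greedy (QFAS)
subset `K_G = K N_r` obtained by adding at each step an antenna maximizing the capacity
satisfies `R(K_G) ≥ (1 - 1/e) R(K*)`, where `K*` maximizes `R` over all subsets of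
cardinality `N_r`. -/
theorem stmt11 (N M : ℕ) (H : Matrix (Fin N) (Fin M) ℂ) (ρ α : ℝ) (hρ : 0 < ρ)
    (hα : α ∈ Set.Ioo (0 : ℝ) 1)
    (d : Fin N → ℝ) (hd : ∀ i, d i = 1 + ρ * (1 - α) * ∑ j, ‖H i j‖ ^ 2)
    (Nr : ℕ) (hNr : Nr ≤ N)
    (K : ℕ → Finset (Fin N)) (hK0 : K 0 = ∅)
    (hgreedy : ∀ t < Nr, ∃ j ∉ K t, K (t + 1) = insert j (K t) ∧
      ∀ j' ∉ K t, stmt11.R H ρ α d (insert j' (K t)) ≤ stmt11.R H ρ α d (insert j (K t)))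
    (Kstar : Finset (Fin N)) (hcard : Kstar.card = Nr)
    (hopt : ∀ B : Finset (Fin N), B.card = Nr → stmt11.R H ρ α d B ≤ stmt11.R H ρ α d Kstar) :
    (1 - 1 / Real.exp 1) * stmt11.R H ρ α d Kstar ≤ stmt11.R H ρ α d (K Nr) := by
  obtain ⟨hα0, hα1⟩ := hα
  have hdp : ∀ i, 0 < d i := by
    intro i
    rw [hd i]
    have : 0 ≤ ρ * (1 - α) * ∑ j, ‖H i j‖ ^ 2 :=
      mul_nonneg (mul_nonneg hρ.le (by linarith)) (Finset.sum_nonneg fun j _ => by positivity)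
    linarith
  have hc : ∀ i, 0 < ρ * α / d i := fun i => div_pos (mul_pos hρ hα0) (hdp i)
  have hR := auxR_eq H ρ α d hdp
  set c : Fin N → ℝ := fun i => ρ * α / d i with hcdef
  have hq : ∀ j L, 0 ≤ c j * auxQ H c j L := fun j L =>
    mul_nonneg (hc j).le (auxQ_nonneg H c hc j L)
  refine aux_greedy (stmt11.R H ρ α d) (fun j L => Real.logb 2 (1 + c j * auxQ H c j L))
    ?_ ?_ ?_ ?_ Nr K hK0 hgreedy Kstar hcard
  · rw [hR]; simp [auxA]
  · intro j L
    exact Real.logb_nonneg (by norm_num) (by linarith [hq j L])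
  · intro j A B hAB
    refine Real.logb_le_logb_of_le (by norm_num) (by linarith [hq j B]) ?_
    have := mul_le_mul_of_nonneg_left (auxQ_anti H c hc j hAB) (hc j).le
    simp only [hcdef] at this ⊢
    linarith
  · intro j L hj
    rw [hR, hR, auxA_insert H c hc L j hj, Real.logb_mul (auxA_det_re_pos H c hc L).1.ne']
    have := hq j L
    positivity
end

section
/- Let N, M, N_sc be positive integers, ρ > 0, α ∈ (0,1). Let G_n ∈ ℂ^{N×M} for n = 1,…,N_sc, and let D ∈ ℝ^{N×N} be a fixed diagonal matrix with strictly positive diagonal entries d_1,…,d_N (in the uplink OFDM model, d_j = 1 + ρ(1−α)·Σ_{ℓ=0}^{L−1} ‖f_{j,ℓ}‖² where f_{j,ℓ}ᴴ is the j-th row of the ℓ-th channel tap, and G_n = Σ_{ℓ=0}^{L−1} H_ℓ·e^{−2πi(n−1)ℓ/N_sc}). For K ⊆ {1,…,N} define the sum capacity f(K) = Σ_{n=1}^{N_sc} log₂ det( I_{|K|} + ρ·α·(D_K)⁻¹·(G_n)_K·(G_n)_Kᴴ ), where (G_n)_K is the row submatrix indexed by K and D_K the corresponding diagonal block. Then f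 is normalized, monotone, and submodular, and for any N_r ≤ N the greedy subset K_G of size N_r (obtained by K₀ = ∅ and K_{t+1} = K_t ∪ {argmax over j ∉ K_t of f(K_t ∪ {j})}) satisfies f(K_G) ≥ (1 − 1/e) · f(K*), where K* maximizes f over all subsets of size N_r. -/
open Matrix

/-- The row submatrix of `A` given by the rows indexed by the subset `K`. -/
noncomputable def stmt14.rowSub {N M : ℕ} (A : Matrix (Fin N) (Fin M) ℂ)
    (K : Finset (Fin N)) : Matrix K (Fin M) ℂ :=
  A.submatrix (fun i => (i : Fin N)) id

/-- The uplink wideband OFDM sum capacity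
`f(K) = Σₙ log₂ det(I + ρα (D_K)⁻¹ (Gₙ)_K (Gₙ)_Kᴴ)`. -/
noncomputable def stmt14.f {N M N_sc : ℕ} (G : Fin N_sc → Matrix (Fin N) (Fin M) ℂ)
    (ρ α : ℝ) (d : Fin N → ℝ) (K : Finset (Fin N)) : ℝ :=
  ∑ n : Fin N_sc, Real.logb 2 ((Matrix.det
    ((1 : Matrix K K ℂ) + ((ρ : ℂ) * (α : ℂ)) •
      (Matrix.diagonal (fun i : K => ((d i.1 : ℝ) : ℂ)))⁻¹ *
      (stmt14.rowSub (G n) K * (stmt14.rowSub (G n) K)ᴴ))).re)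

/-- `1 + ∑_{i ∈ K} w i • g i* g i`. -/
noncomputable def stmt14.P {N M : ℕ} (w : Fin N → ℝ) (g : Matrix (Fin N) (Fin M) ℂ)
    (K : Finset (Fin N)) : Matrix (Fin M) (Fin M) ℂ :=
  1 + ∑ i ∈ K, ((w i : ℝ) : ℂ) • vecMulVec (star (g i)) (g i)

open scoped ComplexOrder in
theorem stmt14.term_psd {N M : ℕ} (w : Fin N → ℝ) (hw : ∀ i, 0 ≤ w i)
    (g : Matrix (Fin N) (Fin M) ℂ) (K : Finset (Fin N)) :
    (∑ i ∈ K, ((w i : ℝ) : ℂ) • vecMulVec (star (g i)) (g i)).PosSemidef := by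
  apply posSemidef_sum
  intro i _
  apply PosSemidef.smul
  · exact posSemidef_vecMulVec_star_self (g i)
  · exact_mod_cast hw i

open scoped ComplexOrder in
theorem stmt14.P_pd {N M : ℕ} (w : Fin N → ℝ) (hw : ∀ i, 0 ≤ w i)
    (g : Matrix (Fin N) (Fin M) ℂ) (K : Finset (Fin N)) : (stmt14.P w g K).PosDef :=
  PosDef.one.add_posSemidef (stmt14.term_psd w hw g K)

/-- Antitonicity of the inverse quadratic form. -/
theorem stmt14.q_anti {M : ℕ} (P S : Matrix (Fin M) (Fin M) ℂ) (x : Fin M → ℂ)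
    (hP : open scoped ComplexOrder in P.PosDef) (hS : open scoped ComplexOrder in S.PosSemidef) :
    (star x ⬝ᵥ ((P + S)⁻¹ *ᵥ x)).re ≤ (star x ⬝ᵥ (P⁻¹ *ᵥ x)).re := by
  open scoped ComplexOrder in
  have hQ : (P + S).PosDef := hP.add_posSemidef hS
  have hPu : IsUnit P.det := (Matrix.isUnit_iff_isUnit_det _).1 hP.isUnit
  have hQu : IsUnit (P + S).det := (Matrix.isUnit_iff_isUnit_det _).1 hQ.isUnit
  set y := (P + S)⁻¹ *ᵥ x with hy
  set z := P⁻¹ *ᵥ x with hz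
  have hPz : P *ᵥ z = x := by rw [hz, mulVec_mulVec, mul_nonsing_inv _ hPu, one_mulVec]
  have hQy : P *ᵥ y + S *ᵥ y = x := by
    rw [← add_mulVec, hy, mulVec_mulVec, mul_nonsing_inv _ hQu, one_mulVec]
  have h1 := hP.posSemidef.re_dotProduct_nonneg (y - z)
  have h2 := hS.re_dotProduct_nonneg y
  have h3 : star y ⬝ᵥ (P *ᵥ y) + star y ⬝ᵥ (S *ᵥ y) = star y ⬝ᵥ x := by
    rw [← dotProduct_add, hQy]
  have h4 : star z ⬝ᵥ (P *ᵥ y) = star x ⬝ᵥ y := by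
    rw [dotProduct_mulVec]
    congr 1
    have hs := congrArg star hPz
    rw [star_mulVec, hP.isHermitian.eq] at hs
    exact hs
  have h5 : (star y ⬝ᵥ x).re = (star x ⬝ᵥ y).re := by
    have : star y ⬝ᵥ x = star (star x ⬝ᵥ y) := by
      rw [star_dotProduct]
    rw [this]; simp
  have h6 : (star z ⬝ᵥ x).re = (star x ⬝ᵥ z).re := by
    have : star z ⬝ᵥ x = star (star x ⬝ᵥ z) := by
      rw [star_dotProduct]
    rw [this]; simp
  rw [mulVec_sub, star_sub, sub_dotProduct, dotProduct_sub, dotProduct_sub, hPz, h4] at h1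
  have h3' := congrArg Complex.re h3
  simp only [RCLike.re_to_complex, Complex.sub_re, Complex.add_re] at h1 h2 h3'
  linarith

open scoped ComplexOrder in
theorem stmt14.P_insert {N M : ℕ} (w : Fin N → ℝ) (hw : ∀ i, 0 ≤ w i)
    (g : Matrix (Fin N) (Fin M) ℂ) (K : Finset (Fin N)) (s : Fin N) (hs : s ∉ K) :
    (stmt14.P w g (insert s K)).det.re = (stmt14.P w g K).det.re *
      (1 + w s * (star (star (g s)) ⬝ᵥ ((stmt14.P w g K)⁻¹ *ᵥ star (g s))).re) := by
  have hpd := stmt14.P_pd w hw g K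
  have hu : IsUnit (stmt14.P w g K).det := (Matrix.isUnit_iff_isUnit_det _).1 hpd.isUnit
  have him : (stmt14.P w g K).det.im = 0 := (Complex.lt_def.1 hpd.det_pos).2.symm
  have e : stmt14.P w g (insert s K) = stmt14.P w g K +
      replicateCol Unit (((w s : ℝ) : ℂ) • star (g s)) * replicateRow Unit (g s) := by
    rw [stmt14.P, Finset.sum_insert hs, stmt14.P, ← vecMulVec_eq, smul_vecMulVec]
    abel
  rw [e, det_add_replicateCol_mul_replicateRow hu, det_unique (n := Unit), Complex.mul_re, him, zero_mul,
    sub_zero]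
  congr 1
  rw [star_star]
  have : (replicateRow Unit (g s) * (stmt14.P w g K)⁻¹ *
      replicateCol Unit (((w s : ℝ) : ℂ) • star (g s))) default default
      = (w s : ℂ) * (g s ⬝ᵥ ((stmt14.P w g K)⁻¹ *ᵥ star (g s))) := by
    rw [Matrix.mul_assoc, ← replicateCol_mulVec, mulVec_smul]
    change g s ⬝ᵥ _ = _
    rw [← smul_eq_mul, ← dotProduct_smul]
    rfl
  rw [Matrix.add_apply, this, Matrix.one_apply_eq, Complex.add_re, Complex.re_ofReal_mul,
    Complex.one_re]

open scoped ComplexOrder in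
theorem stmt14.P_det_pos {N M : ℕ} (w : Fin N → ℝ) (hw : ∀ i, 0 ≤ w i)
    (g : Matrix (Fin N) (Fin M) ℂ) (K : Finset (Fin N)) : 0 < (stmt14.P w g K).det.re :=
  (Complex.lt_def.1 (stmt14.P_pd w hw g K).det_pos).1

/-- the marginal quadratic form -/
noncomputable def stmt14.q {N M : ℕ} (w : Fin N → ℝ) (g : Matrix (Fin N) (Fin M) ℂ)
    (K : Finset (Fin N)) (s : Fin N) : ℝ :=
  w s * (star (star (g s)) ⬝ᵥ ((stmt14.P w g K)⁻¹ *ᵥ star (g s))).re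

open scoped ComplexOrder in
theorem stmt14.q_nonneg {N M : ℕ} (w : Fin N → ℝ) (hw : ∀ i, 0 ≤ w i)
    (g : Matrix (Fin N) (Fin M) ℂ) (K : Finset (Fin N)) (s : Fin N) :
    0 ≤ stmt14.q w g K s :=
  mul_nonneg (hw s) ((stmt14.P_pd w hw g K).inv.posSemidef.re_dotProduct_nonneg _)

theorem stmt14.q_mono {N M : ℕ} (w : Fin N → ℝ) (hw : ∀ i, 0 ≤ w i)
    (g : Matrix (Fin N) (Fin M) ℂ) (A B : Finset (Fin N)) (hAB : A ⊆ B) (s : Fin N) :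
    stmt14.q w g B s ≤ stmt14.q w g A s := by
  have e : stmt14.P w g B = stmt14.P w g A +
      ∑ i ∈ B \ A, ((w i : ℝ) : ℂ) • vecMulVec (star (g i)) (g i) := by
    rw [stmt14.P, stmt14.P, ← Finset.sum_sdiff hAB]; abel
  unfold stmt14.q
  rw [e]
  exact mul_le_mul_of_nonneg_left
    (stmt14.q_anti _ _ _ (stmt14.P_pd w hw g A) (stmt14.term_psd w hw g _)) (hw s)

theorem stmt14.log_insert {N M : ℕ} (w : Fin N → ℝ) (hw : ∀ i, 0 ≤ w i)
    (g : Matrix (Fin N) (Fin M) ℂ) (K : Finset (Fin N)) (s : Fin N) (hs : s ∉ K) :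
    Real.logb 2 (stmt14.P w g (insert s K)).det.re - Real.logb 2 (stmt14.P w g K).det.re
      = Real.logb 2 (1 + stmt14.q w g K s) := by
  rw [stmt14.P_insert w hw g K s hs, Real.logb_mul]
  · unfold stmt14.q; ring
  · exact (stmt14.P_det_pos w hw g K).ne'
  · have := stmt14.q_nonneg w hw g K s
    unfold stmt14.q at this
    positivity

theorem stmt14.f_eq {N M N_sc : ℕ} (G : Fin N_sc → Matrix (Fin N) (Fin M) ℂ)
    (ρ α : ℝ) (d : Fin N → ℝ) (hd : ∀ i, 0 < d i) (K : Finset (Fin N)) :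
    stmt14.f G ρ α d K =
      ∑ n, Real.logb 2 (stmt14.P (fun i => ρ * α / d i) (G n) K).det.re := by
  unfold stmt14.f
  refine Finset.sum_congr rfl fun n _ => ?_
  have hD : (Matrix.diagonal (fun i : K => ((d i.1 : ℝ) : ℂ)))⁻¹
      = Matrix.diagonal (fun i : K => (((d i.1)⁻¹ : ℝ) : ℂ)) := by
    apply inv_eq_right_inv
    rw [diagonal_mul_diagonal, ← diagonal_one]
    congr 1
    ext i
    have : (d i.1 : ℂ) ≠ 0 := by exact_mod_cast (hd i.1).ne'
    push_cast
    field_simp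
  rw [hD, ← Matrix.mul_assoc, det_one_add_mul_comm]
  congr 3
  unfold stmt14.P
  congr 1
  ext a b
  rw [Matrix.sum_apply, ← Finset.sum_coe_sort K, Matrix.mul_apply]
  refine Finset.sum_congr rfl fun i _ => ?_
  rw [← diagonal_smul, diagonal_mul]
  simp [stmt14.rowSub, vecMulVec_apply]
  ring

theorem stmt14.greedy {N : ℕ} (f : Finset (Fin N) → ℝ) (h0 : f ∅ = 0)
    (hmono : ∀ A B : Finset (Fin N), A ⊆ B → f A ≤ f B)
    (hsub : ∀ A B : Finset (Fin N), A ⊆ B → ∀ s ∉ B,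
        f (insert s B) - f B ≤ f (insert s A) - f A)
    (Nr : ℕ) (K : ℕ → Finset (Fin N)) (hK0 : K 0 = ∅)
    (hgreedy : ∀ t < Nr, ∃ j ∉ K t, K (t + 1) = insert j (K t) ∧
      ∀ j' ∉ K t, f (insert j' (K t)) ≤ f (insert j (K t)))
    (S : Finset (Fin N)) (hcard : S.card = Nr) :
    (1 - 1 / Real.exp 1) * f S ≤ f (K Nr) := by
  rcases Nat.eq_zero_or_pos Nr with rfl | hpos
  · rw [Finset.card_eq_zero.1 hcard, hK0, h0]; simp
  have hR : (1 : ℝ) ≤ Nr := by exact_mod_cast hpos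
  have hR0 : (0 : ℝ) < Nr := by linarith
  have key : ∀ t < Nr, f S ≤ f (K t) + Nr * (f (K (t + 1)) - f (K t)) := by
    intro t ht
    obtain ⟨j, hj, hjK, hmax⟩ := hgreedy t ht
    have hδ : 0 ≤ f (K (t + 1)) - f (K t) := by
      have := hmono (K t) (K (t + 1)) (hjK ▸ Finset.subset_insert _ _)
      linarith
    have ind : ∀ T : Finset (Fin N),
        f (K t ∪ T) ≤ f (K t) + T.card * (f (K (t + 1)) - f (K t)) := by
      intro T
      induction T using Finset.induction_on with
      | empty => simp
      | insert s T hs ih =>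
        rw [Finset.card_insert_of_notMem hs, Finset.union_insert]
        push_cast
        by_cases h : s ∈ K t ∪ T
        · rw [Finset.insert_eq_of_mem h]; linarith
        · have h1 := hsub (K t) (K t ∪ T) Finset.subset_union_left s h
          have h2 := hmax s (fun hh => h (Finset.mem_union_left _ hh))
          rw [← hjK] at h2
          linarith
    have := ind S
    rw [hcard] at this
    exact (hmono _ _ Finset.subset_union_right).trans this
  have hfS : 0 ≤ f S := h0 ▸ hmono ∅ S (Finset.empty_subset _)
  have hc : (0 : ℝ) ≤ 1 - 1 / Nr := by
    rw [sub_nonneg, div_le_one hR0]; exact hR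
  have hrec : ∀ t ≤ Nr, f S - f (K t) ≤ (1 - 1 / Nr : ℝ) ^ t * f S := by
    intro t
    induction t with
    | zero => intro _; simp [hK0, h0]
    | succ t ih =>
      intro ht
      have h1 := ih (by omega)
      have h2 := key t (by omega)
      have h3 : f S - f (K (t + 1)) ≤ (1 - 1 / Nr : ℝ) * (f S - f (K t)) := by
        have : (f S - f (K t)) / Nr ≤ f (K (t + 1)) - f (K t) := by
          rw [div_le_iff₀ hR0]; linarith
        have e : (1 - 1 / Nr : ℝ) * (f S - f (K t))
            = (f S - f (K t)) - (f S - f (K t)) / Nr := by ring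
        linarith
      calc _ ≤ _ := h3
        _ ≤ (1 - 1 / Nr : ℝ) * ((1 - 1 / Nr : ℝ) ^ t * f S) :=
          mul_le_mul_of_nonneg_left h1 hc
        _ = _ := by ring
  have h1 := hrec Nr le_rfl
  have h2 := mul_le_mul_of_nonneg_right (Real.one_sub_div_pow_le_exp_neg hR) hfS
  rw [Real.exp_neg] at h2
  have : (1 - 1 / Real.exp 1) * f S = f S - (Real.exp 1)⁻¹ * f S := by ring
  linarith

/-- The uplink wideband OFDM sum capacity
`f(K) = Σₙ log₂ det(I + ρα (D_K)⁻¹ (Gₙ)_K (Gₙ)_Kᴴ)`, with a fixed positive diagonal `D`, is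
normalized, monotone, and submodular, and greedy selection of `N_r` antennas achieves at least
`(1 - 1/e)` of the optimum over subsets of size `N_r`. -/
theorem stmt14 (N M N_sc : ℕ) (hNsc : 0 < N_sc) (ρ α : ℝ) (hρ : 0 < ρ)
    (hα : α ∈ Set.Ioo (0 : ℝ) 1)
    (G : Fin N_sc → Matrix (Fin N) (Fin M) ℂ)
    (d : Fin N → ℝ) (hd : ∀ i, 0 < d i)
    (Nr : ℕ) (hNr : Nr ≤ N)
    (K : ℕ → Finset (Fin N)) (hK0 : K 0 = ∅)
    (hgreedy : ∀ t < Nr, ∃ j ∉ K t, K (t + 1) = insert j (K t) ∧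
      ∀ j' ∉ K t, stmt14.f G ρ α d (insert j' (K t)) ≤ stmt14.f G ρ α d (insert j (K t)))
    (Kstar : Finset (Fin N)) (hcard : Kstar.card = Nr)
    (hopt : ∀ B : Finset (Fin N), B.card = Nr → stmt14.f G ρ α d B ≤ stmt14.f G ρ α d Kstar) :
    stmt14.f G ρ α d ∅ = 0 ∧
      (∀ A B : Finset (Fin N), A ⊆ B → stmt14.f G ρ α d A ≤ stmt14.f G ρ α d B) ∧
      (∀ A B : Finset (Fin N), A ⊆ B → ∀ s ∉ B,
        stmt14.f G ρ α d (insert s B) - stmt14.f G ρ α d B ≤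
          stmt14.f G ρ α d (insert s A) - stmt14.f G ρ α d A) ∧
      (1 - 1 / Real.exp 1) * stmt14.f G ρ α d Kstar ≤ stmt14.f G ρ α d (K Nr) := by
  have hw : ∀ i, 0 ≤ (fun i => ρ * α / d i) i := fun i =>
    div_nonneg (mul_nonneg hρ.le hα.1.le) (hd i).le
  have hfe := stmt14.f_eq G ρ α d hd
  have hins : ∀ (A : Finset (Fin N)) (s : Fin N), s ∉ A →
      stmt14.f G ρ α d (insert s A) - stmt14.f G ρ α d A =
        ∑ n, Real.logb 2 (1 + stmt14.q (fun i => ρ * α / d i) (G n) A s) := by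
    intro A s hs
    rw [hfe, hfe, ← Finset.sum_sub_distrib]
    exact Finset.sum_congr rfl fun n _ => stmt14.log_insert _ hw (G n) A s hs
  have h0 : stmt14.f G ρ α d ∅ = 0 := by
    rw [hfe]; simp [stmt14.P]
  have hmono : ∀ A B : Finset (Fin N), A ⊆ B → stmt14.f G ρ α d A ≤ stmt14.f G ρ α d B := by
    intro A B hAB
    have ind : ∀ T : Finset (Fin N), stmt14.f G ρ α d A ≤ stmt14.f G ρ α d (A ∪ T) := by
      intro T
      induction T using Finset.induction_on with
      | empty => simp
      | insert s T hs ih =>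
        rw [Finset.union_insert]
        by_cases h : s ∈ A ∪ T
        · rwa [Finset.insert_eq_of_mem h]
        · have h1 := hins _ s h
          have h2 : 0 ≤ ∑ n, Real.logb 2
              (1 + stmt14.q (fun i => ρ * α / d i) (G n) (A ∪ T) s) :=
            Finset.sum_nonneg fun n _ => Real.logb_nonneg one_lt_two
              (by linarith [stmt14.q_nonneg _ hw (G n) (A ∪ T) s])
          linarith
    have := ind B
    rwa [Finset.union_eq_right.2 hAB] at this
  have hsub : ∀ A B : Finset (Fin N), A ⊆ B → ∀ s ∉ B,
        stmt14.f G ρ α d (insert s B) - stmt14.f G ρ α d B ≤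
          stmt14.f G ρ α d (insert s A) - stmt14.f G ρ α d A := by
    intro A B hAB s hs
    rw [hins B s hs, hins A s (fun h => hs (hAB h))]
    refine Finset.sum_le_sum fun n _ => ?_
    refine Real.logb_le_logb_of_le one_lt_two ?_ ?_
    · linarith [stmt14.q_nonneg _ hw (G n) B s]
    · linarith [stmt14.q_mono _ hw (G n) A B hAB s]
  exact ⟨h0, hmono, hsub, stmt14.greedy _ h0 hmono hsub Nr K hK0 hgreedy Kstar hcard⟩
end
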